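/- (Slowest candidate trajectory.) Let 𝒜, ℬ, B be n×n matrices over the extended reals ℝ̄, let H = (ℬ^♯ ⊗ 𝒜) ⊕ B, let x(0) ∈ ℝ̄^n, and define x(m) = ℬ^{m'} ⊗' x(0) for m ≥ 0 (min-plus powers of ℬ). Then the following are equivalent: (a) 𝒜 ⊗ x(m-1) ≤ x(m) for all m ≥ 1 and x(m) = B* ⊗ x(m) for all m ≥ 0; (b) H* ⊗ x(m) = x(m) for all m ≥ 0 (i.e. every x(m) lies in the image of H*). -/

import Mathlib

/-!
Both sides reduce to one-step inequalities. A vector is fixed by `A*` iff it is a max-plus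
subsolution, `A ⊗ x ≤ x` (`mpStar_fixed_iff`), and `H ⊗ x ≤ x` splits into
`ℬ^♯ ⊗ (𝒜 ⊗ x) ≤ x` and `B ⊗ x ≤ x`. Residuation (`mpMulVec_conjM_le_iff`) turns the former into
`𝒜 ⊗ x ≤ ℬ ⊗' x`; for `x = x(m)` the right-hand side is `x(m + 1)` by associativity of the
min-plus product.

Everything rests on the scalar Galois connection `a + y ≤ z ↔ y ≤ (-a) +' z`, valid on all of
`EReal` thanks to the two opposite conventions for `⊤ + ⊥`. It makes max-plus addition commute
with arbitrary suprema, hence max-plus products associative; the min-plus case follows by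
conjugation.
-/

noncomputable section

/-- Max-plus matrix product over the extended reals (`-∞` is absorbing for `+` in `EReal`). -/
def mpMul {m n p : ℕ} (A : Matrix (Fin m) (Fin n) EReal) (B : Matrix (Fin n) (Fin p) EReal) :
    Matrix (Fin m) (Fin p) EReal :=
  fun i j => ⨆ k, A i k + B k j

/-- Max-plus matrix-vector product. -/
def mpMulVec {m n : ℕ} (A : Matrix (Fin m) (Fin n) EReal) (x : Fin n → EReal) :
    Fin m → EReal :=
  fun i => ⨆ k, A i k + x k

/-- Min-plus addition on `EReal`: `+∞` is absorbing. -/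
def mnAdd (a b : EReal) : EReal := -((-a) + (-b))

/-- Min-plus matrix product. -/
def mnMul {m n p : ℕ} (A : Matrix (Fin m) (Fin n) EReal) (B : Matrix (Fin n) (Fin p) EReal) :
    Matrix (Fin m) (Fin p) EReal :=
  fun i j => ⨅ k, mnAdd (A i k) (B k j)

/-- Min-plus matrix-vector product. -/
def mnMulVec {m n : ℕ} (A : Matrix (Fin m) (Fin n) EReal) (x : Fin n → EReal) :
    Fin m → EReal :=
  fun i => ⨅ k, mnAdd (A i k) (x k)

/-- Conjugate matrix: `(conj A) i j = -(A j i)`. -/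
def conjM {m n : ℕ} (A : Matrix (Fin m) (Fin n) EReal) : Matrix (Fin n) (Fin m) EReal :=
  fun i j => -(A j i)

/-- Max-plus identity matrix. -/
def mpId (n : ℕ) : Matrix (Fin n) (Fin n) EReal :=
  fun i j => if i = j then 0 else ⊥

/-- Min-plus identity matrix. -/
def mnId (n : ℕ) : Matrix (Fin n) (Fin n) EReal :=
  fun i j => if i = j then 0 else ⊤

/-- Max-plus matrix powers. -/
def mpPow {n : ℕ} (A : Matrix (Fin n) (Fin n) EReal) : ℕ → Matrix (Fin n) (Fin n) EReal
  | 0 => mpId n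
  | k + 1 => mpMul A (mpPow A k)

/-- Min-plus matrix powers. -/
def mnPow {n : ℕ} (A : Matrix (Fin n) (Fin n) EReal) : ℕ → Matrix (Fin n) (Fin n) EReal
  | 0 => mnId n
  | k + 1 => mnMul A (mnPow A k)

/-- Max-plus Kleene star: entrywise supremum of all max-plus powers. -/
def mpStar {n : ℕ} (A : Matrix (Fin n) (Fin n) EReal) : Matrix (Fin n) (Fin n) EReal :=
  fun i j => ⨆ k, mpPow A k i j

/-- Min-plus star: entrywise infimum of all min-plus powers. -/
def mnStar {n : ℕ} (A : Matrix (Fin n) (Fin n) EReal) : Matrix (Fin n) (Fin n) EReal :=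
  fun i j => ⨅ k, mnPow A k i j

/-- Entrywise maximum of two matrices (`A ⊕ B`). -/
def mSup {m n : ℕ} (A B : Matrix (Fin m) (Fin n) EReal) : Matrix (Fin m) (Fin n) EReal :=
  fun i j => A i j ⊔ B i j

/-- Scalar residuation: `a + ·` is left adjoint to min-plus addition of `-a`. -/
lemma add_le_iff_le_mnAdd (a y z : EReal) : a + y ≤ z ↔ y ≤ mnAdd (-a) z := by
  unfold mnAdd
  rw [neg_neg, EReal.le_neg]
  induction a <;> induction y <;> induction z <;> try simp
  norm_cast
  constructor <;> intro h <;> linarith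

lemma iSup_add_le_iff {ι : Sort*} (f : ι → EReal) (y z : EReal) :
    (⨆ i, f i) + y ≤ z ↔ ∀ i, f i + y ≤ z := by
  simp only [add_comm _ y, add_le_iff_le_mnAdd, iSup_le_iff]

lemma add_iSup_le_iff {ι : Sort*} (f : ι → EReal) (y z : EReal) :
    y + (⨆ i, f i) ≤ z ↔ ∀ i, y + f i ≤ z := by
  simp only [add_le_iff_le_mnAdd, iSup_le_iff]

lemma mpMulVec_le_iff {m n : ℕ} (A : Matrix (Fin m) (Fin n) EReal) (x : Fin n → EReal)
    (y : Fin m → EReal) : mpMulVec A x ≤ y ↔ ∀ i k, A i k + x k ≤ y i := by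
  simp only [Pi.le_def, mpMulVec, iSup_le_iff]

lemma mpMulVec_mono {m n : ℕ} (A : Matrix (Fin m) (Fin n) EReal) {x y : Fin n → EReal}
    (h : x ≤ y) : mpMulVec A x ≤ mpMulVec A y :=
  fun _ => iSup_mono fun k => add_le_add_right (h k) _

lemma mpMulVec_mpMul {m n p : ℕ} (A : Matrix (Fin m) (Fin n) EReal)
    (B : Matrix (Fin n) (Fin p) EReal) (x : Fin p → EReal) :
    mpMulVec (mpMul A B) x = mpMulVec A (mpMulVec B x) := by
  refine eq_of_forall_ge_iff fun z => ?_
  simp only [mpMulVec_le_iff]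
  simp only [mpMul, mpMulVec, iSup_add_le_iff, add_iSup_le_iff, add_assoc]
  exact forall_congr' fun _ => forall_comm

/-- Matrix residuation: max-plus multiplication by `A^♯` is left adjoint to min-plus
multiplication by `A`. -/
lemma mpMulVec_conjM_le_iff {m n : ℕ} (A : Matrix (Fin m) (Fin n) EReal) (w : Fin m → EReal)
    (x : Fin n → EReal) : mpMulVec (conjM A) w ≤ x ↔ w ≤ mnMulVec A x := by
  rw [mpMulVec_le_iff]
  simp only [conjM, Pi.le_def, mnMulVec, le_iInf_iff, add_le_iff_le_mnAdd, neg_neg]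
  exact forall_comm

lemma conjM_mnMul {m n p : ℕ} (A : Matrix (Fin m) (Fin n) EReal)
    (B : Matrix (Fin n) (Fin p) EReal) :
    conjM (mnMul A B) = mpMul (conjM B) (conjM A) := by
  funext i j
  have h (f : Fin n → EReal) : -(⨅ k, f k) = ⨆ k, -f k :=
    EReal.negOrderIso.map_iInf f
  simp only [conjM, mnMul, mpMul, mnAdd, h, neg_neg]
  exact iSup_congr fun k => add_comm _ _

lemma mnMulVec_mnMul {m n p : ℕ} (A : Matrix (Fin m) (Fin n) EReal)
    (B : Matrix (Fin n) (Fin p) EReal) (x : Fin p → EReal) :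
    mnMulVec (mnMul A B) x = mnMulVec A (mnMulVec B x) := by
  refine eq_of_forall_le_iff fun w => ?_
  rw [← mpMulVec_conjM_le_iff, conjM_mnMul, mpMulVec_mpMul, mpMulVec_conjM_le_iff,
    mpMulVec_conjM_le_iff]

lemma mpMulVec_mpId {n : ℕ} (x : Fin n → EReal) : mpMulVec (mpId n) x = x := by
  refine eq_of_forall_ge_iff fun z => ?_
  rw [mpMulVec_le_iff]
  constructor
  · intro h i
    simpa [mpId] using h i i
  · intro h i k
    by_cases hik : i = k
    · subst hik
      simpa [mpId] using h i
    · simp [mpId, hik]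

lemma mpMulVec_mpStar_le_iff {n : ℕ} (A : Matrix (Fin n) (Fin n) EReal) (x y : Fin n → EReal) :
    mpMulVec (mpStar A) x ≤ y ↔ ∀ k, mpMulVec (mpPow A k) x ≤ y := by
  simp only [mpMulVec_le_iff, mpStar, iSup_add_le_iff]
  exact ⟨fun h k i j => h i j k, fun h i j k => h k i j⟩

lemma mpStar_fixed_iff {n : ℕ} (A : Matrix (Fin n) (Fin n) EReal) (x : Fin n → EReal) :
    mpMulVec (mpStar A) x = x ↔ mpMulVec A x ≤ x := by
  constructor
  · intro h
    have h1 := (mpMulVec_mpStar_le_iff A x x).1 h.le 1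
    rwa [mpPow, mpPow, mpMulVec_mpMul, mpMulVec_mpId] at h1
  · intro h
    apply le_antisymm
    · rw [mpMulVec_mpStar_le_iff]
      intro k
      induction k with
      | zero => exact (mpMulVec_mpId x).le
      | succ k ih =>
        rw [mpPow, mpMulVec_mpMul]
        exact (mpMulVec_mono A ih).trans h
    · have h0 := (mpMulVec_mpStar_le_iff A x _).1 le_rfl 0
      rwa [mpPow, mpMulVec_mpId] at h0

lemma mpMulVec_mSup_le_iff {m n : ℕ} (A B : Matrix (Fin m) (Fin n) EReal) (x : Fin n → EReal)
    (y : Fin m → EReal) :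
    mpMulVec (mSup A B) x ≤ y ↔ mpMulVec A x ≤ y ∧ mpMulVec B x ≤ y := by
  simp only [mpMulVec_le_iff, mSup, add_comm _ (x _), add_le_iff_le_mnAdd, sup_le_iff,
    forall_and]

/-- slowest candidate trajectory. -/
theorem slowest_candidate {n : ℕ} (𝒜 ℬ B : Matrix (Fin n) (Fin n) EReal)
    (x0 : Fin n → EReal) :
    ((∀ m : ℕ, 1 ≤ m →
        mpMulVec 𝒜 (mnMulVec (mnPow ℬ (m - 1)) x0) ≤ mnMulVec (mnPow ℬ m) x0) ∧
      (∀ m : ℕ, mnMulVec (mnPow ℬ m) x0 = mpMulVec (mpStar B) (mnMulVec (mnPow ℬ m) x0))) ↔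
      (∀ m : ℕ,
        mpMulVec (mpStar (mSup (mpMul (conjM ℬ) 𝒜) B)) (mnMulVec (mnPow ℬ m) x0) =
          mnMulVec (mnPow ℬ m) x0) := by
  have step (m : ℕ) : mnMulVec (mnPow ℬ (m + 1)) x0 = mnMulVec ℬ (mnMulVec (mnPow ℬ m) x0) :=
    mnMulVec_mnMul _ _ _
  simp only [eq_comm (b := mpMulVec (mpStar B) _), mpStar_fixed_iff, mpMulVec_mSup_le_iff,
    mpMulVec_mpMul, mpMulVec_conjM_le_iff, ← step, forall_and]
  refine and_congr_left fun _ => ⟨fun h m => h (m + 1) (Nat.le_add_left 1 m), fun h m hm => ?_⟩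
  obtain ⟨k, rfl⟩ := Nat.exists_eq_add_of_le' hm
  exact h k
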